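/- For any ordered logic program (Π,<), the operator C°_{(Π,<)} is anti-monotonic: for all sets of literals X₁, X₂, if X₁ ⊆ X₂ then C°_{(Π,<)}(X₂) ⊆ C°_{(Π,<)}(X₁). -/

import Mathlib

open scoped Classical

/-- A literal: an atom `A` or its classical negation `¬A`. -/
inductive Lit (α : Type) : Type
  | pos : α → Lit α
  | neg : α → Lit α

/-- A rule with a head literal and finite positive and negative bodies. -/
structure Rule (α : Type) where
  head : Lit α
  pbody : Finset (Lit α)
  nbody : Finset (Lit α)

/-- A program is a set of rules (finiteness is stated as a hypothesis). -/
abbrev Program (α : Type) := Set (Rule α)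

/-- `X` is consistent if it contains no complementary pair. -/
def Consistent {α : Type} (X : Set (Lit α)) : Prop :=
  ¬ ∃ A : α, Lit.pos A ∈ X ∧ Lit.neg A ∈ X

/-- `X` is logically closed if it is consistent or equals the set of all literals. -/
def LogClosed {α : Type} (X : Set (Lit α)) : Prop :=
  Consistent X ∨ X = Set.univ

/-- `X` is closed under (basic) program `P`. -/
def ClosedUnder {α : Type} (P : Program α) (X : Set (Lit α)) : Prop :=
  ∀ r ∈ P, ↑r.pbody ⊆ X → r.head ∈ X

/-- `Cn P` : the smallest logically closed set closed under basic program `P`. -/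
def Cn {α : Type} (P : Program α) : Set (Lit α) :=
  ⋂₀ {X | LogClosed X ∧ ClosedUnder P X}

/-- The reduct of `P` relative to `X`. -/
def reduct {α : Type} (P : Program α) (X : Set (Lit α)) : Program α :=
  {s | ∃ r ∈ P, (↑r.nbody ∩ X = (∅ : Set (Lit α))) ∧ s = ⟨r.head, r.pbody, ∅⟩}

/-- A program is basic if all its rules have empty negative body. -/
def IsBasic {α : Type} (P : Program α) : Prop := ∀ r ∈ P, r.nbody = ∅

/-- `C_Π(X) = Cn(Π^X)`. -/
noncomputable def Cop {α : Type} (P : Program α) (X : Set (Lit α)) : Set (Lit α) :=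
  Cn (reduct P X)

/-- `A_Π(X) = C_Π(C_Π(X))`. -/
noncomputable def Aop {α : Type} (P : Program α) (X : Set (Lit α)) : Set (Lit α) :=
  Cop P (Cop P X)

/-- `X` is an answer set of `P` iff `Cn(P^X) = X`. -/
def AnswerSet {α : Type} (P : Program α) (X : Set (Lit α)) : Prop :=
  Cn (reduct P X) = X

/-- Immediate consequence operator for a basic program. -/
noncomputable def T {α : Type} (P : Program α) (X : Set (Lit α)) : Set (Lit α) :=
  if Consistent X then {L | ∃ r ∈ P, ↑r.pbody ⊆ X ∧ L = r.head} else Set.univ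

/-- `r` is active wrt `(X, Y)`. -/
def Active {α : Type} (r : Rule α) (X Y : Set (Lit α)) : Prop :=
  ↑r.pbody ⊆ X ∧ ↑r.nbody ∩ Y = (∅ : Set (Lit α))

/-- Extended immediate consequence operator `T_{Π,Y}(X)`. -/
noncomputable def TE {α : Type} (P : Program α) (Y X : Set (Lit α)) : Set (Lit α) :=
  if Consistent X then {L | ∃ r ∈ P, Active r X Y ∧ L = r.head} else Set.univ

/-- Preference-sensitive operator `T_{(Π,<),Y}(X)` (Definition 1). -/
noncomputable def TP {α : Type} (P : Program α) (lt : Rule α → Rule α → Prop)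
    (Y X : Set (Lit α)) : Set (Lit α) :=
  if Consistent X then
    {L | ∃ r ∈ P, Active r X Y ∧
      (¬ ∃ r' ∈ P, lt r r' ∧ Active r' Y X ∧ r'.head ∉ X) ∧ L = r.head}
  else Set.univ

/-- `C_{(Π,<)}(X)` (Definition 2). -/
noncomputable def CP {α : Type} (P : Program α) (lt : Rule α → Rule α → Prop)
    (X : Set (Lit α)) : Set (Lit α) :=
  ⋃ i : ℕ, (TP P lt X)^[i] ∅

/-- `A_{(Π,<)}(X) = C_{(Π,<)}(C_{(Π,<)}(X))`. -/
noncomputable def AP {α : Type} (P : Program α) (lt : Rule α → Rule α → Prop)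
    (X : Set (Lit α)) : Set (Lit α) :=
  CP P lt (CP P lt X)

/-- The set `D^r_{(X,Y)}` of removable literals. -/
def D {α : Type} (P : Program α) (lt : Rule α → Rule α → Prop) (r : Rule α)
    (X Y : Set (Lit α)) : Set (Lit α) :=
  {L | ∀ r' ∈ P, r'.head = L → ↑r'.pbody ⊆ Y →
      lt r' r ∧ ({r.head} ∪ X) ∩ ↑r'.nbody ≠ (∅ : Set (Lit α))}

/-- `T°_{(Π,<),Y}(X)` (Definition 3). -/
noncomputable def TN {α : Type} (P : Program α) (lt : Rule α → Rule α → Prop)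
    (Y X : Set (Lit α)) : Set (Lit α) :=
  if Consistent X then
    {L | ∃ r ∈ P, Active r X (Y \ D P lt r X Y) ∧ L = r.head}
  else Set.univ

/-- `C°_{(Π,<)}(X)` (Definition 4). -/
noncomputable def CN {α : Type} (P : Program α) (lt : Rule α → Rule α → Prop)
    (X : Set (Lit α)) : Set (Lit α) :=
  ⋃ i : ℕ, (TN P lt X)^[i] ∅

/-- `A°_{(Π,<)}(X) = C°_{(Π,<)}(C_Π(X))`. -/
noncomputable def AN {α : Type} (P : Program α) (lt : Rule α → Rule α → Prop)
    (X : Set (Lit α)) : Set (Lit α) :=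
  CN P lt (Cop P X)

/-! Enlarging `Y` shrinks the set `D^r_{(X,Y)}` of removable literals, whereas enlarging `X`
enlarges it. Hence `Y \ D^r_{(X,Y)}`, which the negative body of `r` has to avoid, grows with `Y`
and shrinks as `X` grows, so `T°_{(Π,<),Y}(X)` is monotone in `X` and antitone in `Y`;
monotonicity in `X` carries the comparison in `Y` through the iterates. -/

section

variable {α : Type} {P : Program α} {lt : Rule α → Rule α → Prop} {r : Rule α} {L : Lit α}
  {X X₁ X₂ Y Y₁ Y₂ : Set (Lit α)}

lemma Consistent.mono (hX : X₁ ⊆ X₂) (h : Consistent X₂) : Consistent X₁ :=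
  fun ⟨A, hpos, hneg⟩ => h ⟨A, hX hpos, hX hneg⟩

lemma Active.mono (hX : X₁ ⊆ X₂) (hY : Y₂ ⊆ Y₁) (h : Active r X₁ Y₁) : Active r X₂ Y₂ :=
  ⟨h.1.trans hX, Set.subset_eq_empty (Set.inter_subset_inter_right _ hY) h.2⟩

lemma D_subset_D (hX : X₁ ⊆ X₂) (hY : Y₂ ⊆ Y₁) : D P lt r X₁ Y₁ ⊆ D P lt r X₂ Y₂ := by
  intro L hL r' hr' hhead hpbody
  obtain ⟨hlt, hmeet⟩ := hL r' hr' hhead (hpbody.trans hY)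
  have hinter : ({r.head} ∪ X₁) ∩ ↑r'.nbody ⊆ ({r.head} ∪ X₂) ∩ ↑r'.nbody :=
    Set.inter_subset_inter_left _ (Set.union_subset_union_right _ hX)
  exact ⟨hlt, fun hempty => hmeet (Set.subset_eq_empty hinter hempty)⟩

lemma mem_TN_iff : L ∈ TN P lt Y X ↔
    (Consistent X → ∃ r ∈ P, Active r X (Y \ D P lt r X Y) ∧ L = r.head) := by
  by_cases hX : Consistent X <;> simp [TN, hX]

lemma TN_subset_TN (hX : X₁ ⊆ X₂) (hY : Y₂ ⊆ Y₁) : TN P lt Y₁ X₁ ⊆ TN P lt Y₂ X₂ := by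
  intro L hL
  rw [mem_TN_iff] at hL ⊢
  intro hcons
  obtain ⟨r, hr, hactive, rfl⟩ := hL (hcons.mono hX)
  have hsdiff : Y₂ \ D P lt r X₂ Y₂ ⊆ Y₁ \ D P lt r X₁ Y₁ :=
    Set.sdiff_subset_sdiff hY (D_subset_D hX hY)
  exact ⟨r, hr, hactive.mono hX hsdiff, rfl⟩

variable (P lt)

lemma TN_monotone (Y : Set (Lit α)) : Monotone (TN P lt Y) :=
  fun _ _ hX => TN_subset_TN hX subset_rfl

lemma TN_antitone : Antitone (TN P lt) :=
  fun _ _ hY _ => TN_subset_TN subset_rfl hY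

theorem CN_antimono_general : Antitone (CN P lt) :=
  fun _ X₂ hX => Set.iUnion_mono fun i =>
    (TN_monotone P lt X₂).iterate_le_of_le (TN_antitone P lt hX) i ∅

end

/-- Theorem 1: `C°_{(Π,<)}` is anti-monotonic. -/
theorem CN_antimono {α : Type} (P : Program α) (hfin : P.Finite)
    (lt : Rule α → Rule α → Prop)
    (hirr : ∀ r, ¬ lt r r) (htrans : ∀ r₁ r₂ r₃, lt r₁ r₂ → lt r₂ r₃ → lt r₁ r₃)
    (X₁ X₂ : Set (Lit α)) (h : X₁ ⊆ X₂) :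
    CN P lt X₂ ⊆ CN P lt X₁ :=
  CN_antimono_general P lt h
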